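/- If a d.c.e. real is neither left-c.e. nor right-c.e., then it is fully d.c.e. speedable, i.e., every d.c.e. approximation of it is speedable. -/

import Mathlib

open Filter

/-- A computable approximation of a real `α`: a computable sequence of
rationals in `[0,1]` converging to `α`. -/
def IsCompApprox (a : ℕ → ℚ) (α : ℝ) : Prop :=
  Computable a ∧ (∀ s, a s ∈ Set.Icc (0 : ℚ) 1) ∧
    Tendsto (fun s => (a s : ℝ)) atTop (nhds α)

/-- A d.c.e. approximation: a computable approximation with bounded variation. -/
def IsDCEApprox (a : ℕ → ℚ) (α : ℝ) : Prop :=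
  IsCompApprox a α ∧ Summable (fun s => |(a (s + 1) : ℝ) - (a s : ℝ)|)

/-- A computable order: a nondecreasing unbounded computable function. -/
def IsComputableOrder (f : ℕ → ℕ) : Prop :=
  Computable f ∧ Monotone f ∧ Tendsto f atTop atTop

/-- The liminf (in the extended reals) of `|(α - a (f s)) / (α - a s)|`. -/
noncomputable def speedLiminf (a : ℕ → ℚ) (f : ℕ → ℕ) (α : ℝ) : EReal :=
  Filter.liminf (fun s => ((|(α - (a (f s) : ℝ)) / (α - (a s : ℝ))| : ℝ) : EReal)) atTop

/-- A computable approximation `a` of `α` is `ρ`-speedable. -/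
def IsRhoSpeedable (a : ℕ → ℚ) (α : ℝ) (ρ : ℚ) : Prop :=
  (∃ q : ℚ, α = (q : ℝ)) ∨
    ∃ f, IsComputableOrder f ∧ speedLiminf a f α ≤ (((ρ : ℝ) : EReal))

/-- A computable approximation is speedable if it is `ρ`-speedable for some rational
`ρ ∈ [0,1)`. -/
def IsSpeedable (a : ℕ → ℚ) (α : ℝ) : Prop :=
  ∃ ρ : ℚ, 0 ≤ ρ ∧ ρ < 1 ∧ IsRhoSpeedable a α ρ

/-- A Solovay test: computable sequences of rationals `l i ≤ r i` in `[0,1]`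
with `Σ (r i - l i) < ∞`. -/
structure SolovayTest where
  l : ℕ → ℚ
  r : ℕ → ℚ
  comp_l : Computable l
  comp_r : Computable r
  mem_l : ∀ i, l i ∈ Set.Icc (0 : ℚ) 1
  mem_r : ∀ i, r i ∈ Set.Icc (0 : ℚ) 1
  le : ∀ i, l i ≤ r i
  summable : Summable (fun i => (r i : ℝ) - (l i : ℝ))

/-- A real `γ` is covered by a Solovay test if `γ ∈ [l i, r i]` for infinitely many `i`. -/
def SolovayTest.Covers (T : SolovayTest) (γ : ℝ) : Prop :=
  ∃ᶠ i in atTop, γ ∈ Set.Icc (T.l i : ℝ) (T.r i : ℝ)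

/-- The sequence of endpoints `l 0, r 0, l 1, r 1, …` of a Solovay test. -/
def SolovayTest.endpoints (T : SolovayTest) (n : ℕ) : ℚ :=
  if n % 2 = 0 then T.l (n / 2) else T.r (n / 2)

/-!
Let `a` be an approximation of `γ` that is not `3 / 4`-speedable. Then along every computable
subsequence the errors of consecutive terms eventually agree up to a factor `3 / 4`. Starting from
a step `a r, a (r + 1)`, wait for the first `t` such that the distance from `a (r + 1)` to
`a (t + 1)` exceeds a third of the length of that step; such a `t` exists, because the step is less
than three times as long as the error of `a (r + 1)`. Until then the approximation stays on the
side of `γ` on which `a (r + 1)` lies. So if `a (t + 1)` lies on the other side, then the step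
`a t, a (t + 1)` crosses `γ`, hence is at least as long as the error of `a (t + 1)`, and the next
term found in the same way is so far away from `a (t + 1)` that it cannot lie on the same side of
`γ` with a comparable error: it lies on the opposite side again. Hence the terms found in this way
eventually stay on one side of `γ` or eventually alternate, and in both cases a computable
subsequence of `a` lies on one side. Its running maxima or minima show that `γ` is left-c.e. or
right-c.e.
-/

/-! ### Computability of rational arithmetic -/

theorem computablePred_comp {α β : Type*} [Primcodable α] [Primcodable β] {p : β → Prop}
    {f : α → β} (hp : ComputablePred p) (hf : Computable f) : ComputablePred fun x => p (f x) :=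
  have ⟨_, hp⟩ := hp
  ⟨inferInstance, hp.comp hf⟩

theorem computable_of_computablePred_graph {α β : Type*} [Primcodable α] [Denumerable β]
    {f : α → β} (hf : ComputablePred fun p : α × β => f p.1 = p.2) : Computable f := by
  classical
  have hex (x : α) : ∃ n, f x = Denumerable.ofNat β n := ⟨Encodable.encode (f x), by simp⟩
  have hgraph : ComputablePred fun p : α × ℕ => f p.1 = Denumerable.ofNat β p.2 :=
    computablePred_comp hf (Computable.fst.pair ((Computable.ofNat β).comp Computable.snd))
  exact ((Computable.ofNat β).comp (Computable.find hgraph hex)).of_eq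
    fun x => (Nat.find_spec (hex x)).symm

theorem computable_nat_count {p : ℕ → Prop} [DecidablePred p] (hp : ComputablePred p) :
    Computable (Nat.count p) := by
  have hstep : Computable₂ fun (_ : ℕ) (x : ℕ × ℕ) => bif p x.1 then x.2 + 1 else x.2 :=
    Computable.cond (hp.decide.comp (Computable.fst.comp Computable.snd))
      (Computable.succ.comp (Computable.snd.comp Computable.snd))
      (Computable.snd.comp Computable.snd)
  refine (Computable.nat_rec Computable.id (Computable.const 0) hstep).of_eq fun n => ?_
  induction n with
  | zero => rfl
  | succ n ih =>
    simp only [id_eq] at ih ⊢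
    by_cases h : p n <;> simp [Nat.count_succ, ih, h]

theorem computable_nat_nth {p : ℕ → Prop} (hp : ComputablePred p)
    (hinf : (Set.ofPred p).Infinite) : Computable (Nat.nth p) := by
  classical
  have hiff (n m : ℕ) : n < Nat.count p (m + 1) ↔ Nat.nth p n ≤ m := by
    rw [Nat.lt_nth_iff_count_lt hinf, Nat.lt_succ_iff]
  have hex (n : ℕ) : ∃ m, n < Nat.count p (m + 1) := ⟨_, (hiff n _).2 le_rfl⟩
  have hlt : ComputablePred fun x : ℕ × ℕ => x.1 < Nat.count p (x.2 + 1) :=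
    computablePred_comp Primrec.nat_lt.computablePred
      (Computable.fst.pair ((computable_nat_count hp).comp (Computable.succ.comp Computable.snd)))
  refine (Computable.find hlt hex).of_eq fun n => ?_
  simp [Nat.find_eq_iff, hiff]

theorem encode_ofNat_ofEncodableOfInfinite {α : Type*} [Encodable α] [Infinite α] (n : ℕ) :
    Encodable.encode (@Denumerable.ofNat α (Denumerable.ofEncodableOfInfinite α) n) =
      Nat.nth (· ∈ Set.range (Encodable.encode : α → ℕ)) n := by
  let _ := Encodable.decidableRangeEncode α
  have hinf : (Set.range (Encodable.encode : α → ℕ)).Infinite :=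
    Set.infinite_range_of_injective Encodable.encode_injective
  have := hinf.to_subtype
  calc Encodable.encode (@Denumerable.ofNat α (Denumerable.ofEncodableOfInfinite α) n)
      = Encodable.encode ((Encodable.equivRangeEncode α).symm (Nat.Subtype.ofNat _ n)) := rfl
    _ = (Encodable.equivRangeEncode α ((Encodable.equivRangeEncode α).symm
          (Nat.Subtype.ofNat _ n)) : ℕ) := rfl
    _ = Nat.Subtype.ofNat (Set.range (Encodable.encode : α → ℕ)) n := by
      rw [Equiv.apply_symm_apply]
    _ = Nat.nth (· ∈ Set.range (Encodable.encode : α → ℕ)) n := by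
      rw [← Nat.Subtype.orderIsoOfNat_apply]
      exact (Nat.nth_apply_eq_orderIsoOfNat hinf n).symm

theorem nth_range_encode_ofEncodableOfInfinite {α : Type*} [Encodable α] [Infinite α] (x : α) :
    Nat.nth (· ∈ Set.range (Encodable.encode : α → ℕ))
      (@Encodable.encode α (Denumerable.ofEncodableOfInfinite α).toEncodable x) =
        Encodable.encode x := by
  rw [← encode_ofNat_ofEncodableOfInfinite,
    @Denumerable.ofNat_encode α (Denumerable.ofEncodableOfInfinite α)]

theorem primrec_int_natCast : Primrec ((↑) : ℕ → ℤ) :=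
  Primrec.encode_iff.1 (Primrec.nat_mul.comp (Primrec.const 2) Primrec.id)

theorem primrecPred_encode_even : PrimrecPred fun z : ℤ => Encodable.encode z % 2 = 0 :=
  Primrec.eq.comp (Primrec.nat_mod.comp Primrec.encode (Primrec.const 2)) (Primrec.const 0)

theorem primrec_int_neg : Primrec ((- ·) : ℤ → ℤ) := by
  refine Primrec.encode_iff.1 <| (Primrec.ite primrecPred_encode_even
    (Primrec.pred.comp Primrec.encode) (Primrec.succ.comp Primrec.encode)).of_eq fun z => ?_
  rcases z with (_ | n) | n
  · rfl
  · change (if (2 * (n + 1)) % 2 = 0 then 2 * (n + 1) - 1 else 2 * (n + 1) + 1) = 2 * n + 1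
    grind
  · change (if (2 * n + 1) % 2 = 0 then 2 * n + 1 - 1 else 2 * n + 1 + 1) = 2 * (n + 1)
    grind

theorem primrec_int_toNat : Primrec Int.toNat := by
  refine (Primrec.ite primrecPred_encode_even (Primrec.nat_div.comp Primrec.encode
    (Primrec.const 2)) (Primrec.const 0)).of_eq fun z => ?_
  rcases z with n | n
  · change (if (2 * n) % 2 = 0 then 2 * n / 2 else 0) = n
    grind
  · change (if (2 * n + 1) % 2 = 0 then (2 * n + 1) / 2 else 0) = 0
    grind

theorem primrec_int_natCast_sub : Primrec₂ fun m n : ℕ => (m : ℤ) - n := by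
  refine (Primrec.ite (Primrec.nat_le.comp Primrec.snd Primrec.fst)
    (primrec_int_natCast.comp Primrec.nat_sub) (primrec_int_neg.comp
      (primrec_int_natCast.comp (Primrec.nat_sub.comp Primrec.snd Primrec.fst)))).of_eq fun p => ?_
  split_ifs <;> lia

theorem primrec_int_sub : Primrec₂ ((· - ·) : ℤ → ℤ → ℤ) := by
  have pos {f : ℤ × ℤ → ℤ} (hf : Primrec f) := primrec_int_toNat.comp hf
  have neg {f : ℤ × ℤ → ℤ} (hf : Primrec f) := primrec_int_toNat.comp (primrec_int_neg.comp hf)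
  refine (primrec_int_natCast_sub.comp
    (Primrec.nat_add.comp (pos Primrec.fst) (neg Primrec.snd))
    (Primrec.nat_add.comp (neg Primrec.fst) (pos Primrec.snd))).of_eq fun p => ?_
  push_cast
  lia

theorem primrec_int_mul : Primrec₂ ((· * ·) : ℤ → ℤ → ℤ) := by
  have pos {f : ℤ × ℤ → ℤ} (hf : Primrec f) := primrec_int_toNat.comp hf
  have neg {f : ℤ × ℤ → ℤ} (hf : Primrec f) := primrec_int_toNat.comp (primrec_int_neg.comp hf)
  refine (primrec_int_natCast_sub.comp
    (Primrec.nat_add.comp (Primrec.nat_mul.comp (pos Primrec.fst) (pos Primrec.snd))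
      (Primrec.nat_mul.comp (neg Primrec.fst) (neg Primrec.snd)))
    (Primrec.nat_add.comp (Primrec.nat_mul.comp (pos Primrec.fst) (neg Primrec.snd))
      (Primrec.nat_mul.comp (neg Primrec.fst) (pos Primrec.snd)))).of_eq fun p => ?_
  conv_rhs => rw [← Int.toNat_sub_toNat_neg p.1, ← Int.toNat_sub_toNat_neg p.2]
  push_cast
  ring

theorem primrec_int_natAbs : Primrec Int.natAbs :=
  (Primrec.nat_add.comp primrec_int_toNat (primrec_int_toNat.comp primrec_int_neg)).of_eq
    Int.toNat_add_toNat_neg_eq_natAbs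

theorem primrecRel_int_le : PrimrecRel ((· ≤ ·) : ℤ → ℤ → Prop) :=
  (Primrec.eq.comp (primrec_int_toNat.comp primrec_int_sub) (Primrec.const 0)).of_eq
    fun p => by simp

theorem primrecRel_nat_dvd : PrimrecRel ((· ∣ ·) : ℕ → ℕ → Prop) :=
  (Primrec.eq.comp (Primrec.nat_mod.comp Primrec.snd Primrec.fst) (Primrec.const 0)).of_eq
    fun _ => Nat.dvd_iff_mod_eq_zero.symm

theorem primrecRel_nat_coprime : PrimrecRel Nat.Coprime := by
  have hdvd : PrimrecRel fun (d : ℕ) (p : ℕ × ℕ) => ¬(d ∣ p.1 ∧ d ∣ p.2) ∨ d = 1 :=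
    ((primrecRel_nat_dvd.comp Primrec.fst (Primrec.fst.comp Primrec.snd)).and
      (primrecRel_nat_dvd.comp Primrec.fst (Primrec.snd.comp Primrec.snd))).not.or
      (Primrec.eq.comp Primrec.fst (Primrec.const 1))
  refine (hdvd.forall_mem_list.comp (Primrec.list_range.comp (Primrec.succ.comp
    (Primrec.nat_add.comp Primrec.fst Primrec.snd))) (Primrec.id (α := ℕ × ℕ))).of_eq fun p => ?_
  simp only [List.mem_range, id_eq]
  constructor
  · intro h
    have hle : p.1.gcd p.2 < p.1 + p.2 + 1 := by
      rcases p.1.eq_zero_or_pos with h0 | h0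
      · simp [h0]
      · have := Nat.gcd_le_left p.2 h0
        lia
    exact (h _ hle).resolve_left (not_not.2 ⟨Nat.gcd_dvd_left .., Nat.gcd_dvd_right ..⟩)
  · intro h d _
    exact or_iff_not_imp_left.2 fun hd =>
      Nat.eq_one_of_dvd_coprimes h (not_not.1 hd).1 (not_not.1 hd).2

/- Mathlib's `Primcodable ℚ` numbers a rational by the rank of its code `⟨num, den⟩` in the set of
all such codes, so numerators and denominators are recovered by enumerating that set. -/

theorem encode_rat (q : ℚ) :
    @Encodable.encode ℚ Rat.instEncodable q = Encodable.encode (q.num, q.den) := rfl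

theorem mem_range_encode_rat (n : ℕ) :
    n ∈ Set.range (@Encodable.encode ℚ Rat.instEncodable) ↔
      0 < (Denumerable.ofNat (ℤ × ℕ) n).2 ∧
        (Denumerable.ofNat (ℤ × ℕ) n).1.natAbs.Coprime (Denumerable.ofNat (ℤ × ℕ) n).2 := by
  constructor
  · rintro ⟨q, rfl⟩
    rw [encode_rat, Denumerable.ofNat_encode]
    exact ⟨q.den_pos, q.reduced⟩
  · rintro ⟨hpos, hcop⟩
    refine ⟨⟨_, _, hpos.ne', hcop⟩, ?_⟩
    rw [encode_rat]
    exact Denumerable.encode_ofNat (α := ℤ × ℕ) n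

theorem computablePred_mem_range_encode_rat :
    ComputablePred (· ∈ Set.range (@Encodable.encode ℚ Rat.instEncodable)) := by
  have hnum : Primrec fun n => (Denumerable.ofNat (ℤ × ℕ) n).1 :=
    Primrec.fst.comp (Primrec.ofNat _)
  have hden : Primrec fun n => (Denumerable.ofNat (ℤ × ℕ) n).2 :=
    Primrec.snd.comp (Primrec.ofNat _)
  exact (((Primrec.nat_lt.comp (Primrec.const 0) hden).and
    (primrecRel_nat_coprime.comp (primrec_int_natAbs.comp hnum) hden)).computablePred).of_eq
    fun n => (mem_range_encode_rat n).symm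

theorem computable_rat_num_den : Computable fun q : ℚ => (q.num, q.den) := by
  have hnth : Computable (Nat.nth (· ∈ Set.range (@Encodable.encode ℚ Rat.instEncodable))) :=
    computable_nat_nth computablePred_mem_range_encode_rat
      (Set.infinite_range_of_injective (@Encodable.encode_injective ℚ Rat.instEncodable))
  refine ((Computable.ofNat (ℤ × ℕ)).comp (hnth.comp Computable.encode)).of_eq fun q => ?_
  rw [show Nat.nth (· ∈ Set.range (@Encodable.encode ℚ Rat.instEncodable))
      (@Encodable.encode ℚ Primcodable.toEncodable q) = @Encodable.encode ℚ Rat.instEncodable q from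
    @nth_range_encode_ofEncodableOfInfinite ℚ Rat.instEncodable _ q,
    encode_rat, Denumerable.ofNat_encode]

theorem computable_rat_num : Computable Rat.num :=
  Computable.fst.comp computable_rat_num_den

theorem computable_rat_den : Computable Rat.den :=
  Computable.snd.comp computable_rat_num_den

theorem mkRat_eq_iff_num_den {n : ℤ} {d : ℕ} {q : ℚ} :
    mkRat n d = q ↔ (d = 0 ∧ q.num = 0) ∨ (d ≠ 0 ∧ n * q.den = q.num * d) := by
  rcases eq_or_ne d 0 with rfl | hd
  · simp [eq_comm]
  · conv_lhs => rw [← Rat.mkRat_self q, Rat.mkRat_eq_iff hd q.den_ne_zero]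
    simp [hd]

theorem computable_mkRat : Computable₂ mkRat := by
  have hgraph : PrimrecPred fun p : (ℤ × ℕ) × (ℤ × ℕ) =>
      (p.1.2 = 0 ∧ p.2.1 = 0) ∨ (p.1.2 ≠ 0 ∧ p.1.1 * p.2.2 = p.2.1 * p.1.2) := by
    have n : Primrec fun p : (ℤ × ℕ) × (ℤ × ℕ) => p.1.1 := Primrec.fst.comp Primrec.fst
    have d : Primrec fun p : (ℤ × ℕ) × (ℤ × ℕ) => p.1.2 := Primrec.snd.comp Primrec.fst
    have n' : Primrec fun p : (ℤ × ℕ) × (ℤ × ℕ) => p.2.1 := Primrec.fst.comp Primrec.snd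
    have d' : Primrec fun p : (ℤ × ℕ) × (ℤ × ℕ) => p.2.2 := Primrec.snd.comp Primrec.snd
    have hd : PrimrecPred fun p : (ℤ × ℕ) × (ℤ × ℕ) => p.1.2 = 0 :=
      Primrec.eq.comp d (Primrec.const 0)
    exact (hd.and (Primrec.eq.comp n' (Primrec.const 0))).or
      (hd.not.and (Primrec.eq.comp (primrec_int_mul.comp n (primrec_int_natCast.comp d'))
        (primrec_int_mul.comp n' (primrec_int_natCast.comp d))))
  exact computable_of_computablePred_graph <| (computablePred_comp hgraph.computablePred
    (Computable.fst.pair (computable_rat_num_den.comp Computable.snd))).of_eq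
      fun _ => mkRat_eq_iff_num_den.symm

theorem computablePred_rat_le : ComputablePred fun p : ℚ × ℚ => p.1 ≤ p.2 := by
  have hle : PrimrecPred fun p : (ℤ × ℕ) × (ℤ × ℕ) => p.1.1 * p.2.2 ≤ p.2.1 * p.1.2 :=
    primrecRel_int_le.comp
      (primrec_int_mul.comp (Primrec.fst.comp Primrec.fst)
        (primrec_int_natCast.comp (Primrec.snd.comp Primrec.snd)))
      (primrec_int_mul.comp (Primrec.fst.comp Primrec.snd)
        (primrec_int_natCast.comp (Primrec.snd.comp Primrec.fst)))
  exact (computablePred_comp hle.computablePred ((computable_rat_num_den.comp Computable.fst).pair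
    (computable_rat_num_den.comp Computable.snd))).of_eq fun p => (Rat.le_iff p.1 p.2).symm

theorem computablePred_rat_lt : ComputablePred fun p : ℚ × ℚ => p.1 < p.2 :=
  (computablePred_comp computablePred_rat_le (Computable.snd.pair Computable.fst)).not.of_eq
    fun _ => not_le

theorem computable_rat_max : Computable₂ (max : ℚ → ℚ → ℚ) :=
  (Computable.cond computablePred_rat_le.decide Computable.snd Computable.fst).of_eq
    fun p => by simp [max_def, Bool.cond_decide]

theorem computable_rat_sub : Computable₂ ((· - ·) : ℚ → ℚ → ℚ) := by
  have num {f : ℚ × ℚ → ℚ} (hf : Computable f) := computable_rat_num.comp hf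
  have den {f : ℚ × ℚ → ℚ} (hf : Computable f) := computable_rat_den.comp hf
  have cross {f g : ℚ × ℚ → ℚ} (hf : Computable f) (hg : Computable g) :=
    primrec_int_mul.to_comp.comp (num hf) (primrec_int_natCast.to_comp.comp (den hg))
  exact (computable_mkRat.comp
    (primrec_int_sub.to_comp.comp (cross Computable.fst Computable.snd)
      (cross Computable.snd Computable.fst))
    (Primrec.nat_mul.to_comp.comp (den Computable.fst) (den Computable.snd))).of_eq
      fun p => (Rat.sub_def' p.1 p.2).symm

theorem computable_rat_mul : Computable₂ ((· * ·) : ℚ → ℚ → ℚ) := by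
  exact (computable_mkRat.comp (primrec_int_mul.to_comp.comp
    (computable_rat_num.comp Computable.fst) (computable_rat_num.comp Computable.snd))
    (Primrec.nat_mul.to_comp.comp (computable_rat_den.comp Computable.fst)
      (computable_rat_den.comp Computable.snd))).of_eq fun p => (Rat.mul_def' p.1 p.2).symm

theorem computable_rat_abs : Computable (abs : ℚ → ℚ) :=
  (computable_rat_max.comp Computable.id
    (computable_rat_sub.comp (Computable.const 0) Computable.id)).of_eq
    fun q => by simp [abs_eq_max_neg]

/-! ### One-sided approximations -/

/-- `γ` is left-c.e.: some computable approximation of `γ` is nondecreasing. -/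
def IsLeftCE (γ : ℝ) : Prop :=
  ∃ a : ℕ → ℚ, IsCompApprox a γ ∧ Monotone a

/-- `γ` is right-c.e.: some computable approximation of `γ` is nonincreasing. -/
def IsRightCE (γ : ℝ) : Prop :=
  ∃ a : ℕ → ℚ, IsCompApprox a γ ∧ Antitone a

/-- `x` and `y` lie on different sides of `γ`, where `γ` itself counts as lying on the right. -/
def Separates (γ x y : ℝ) : Prop :=
  ¬(x < γ ↔ y < γ)

theorem IsCompApprox.comp {a : ℕ → ℚ} {γ : ℝ} (ha : IsCompApprox a γ) {u : ℕ → ℕ}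
    (hu : Computable u) (hu' : Tendsto u atTop atTop) : IsCompApprox (a ∘ u) γ :=
  ⟨ha.1.comp hu, fun s => ha.2.1 (u s), ha.2.2.comp hu'⟩

theorem IsCompApprox.one_sub {a : ℕ → ℚ} {γ : ℝ} (ha : IsCompApprox a γ) :
    IsCompApprox (fun s => 1 - a s) (1 - γ) := by
  obtain ⟨hcomp, hmem, hlim⟩ := ha
  refine ⟨computable_rat_sub.comp (Computable.const 1) hcomp,
    fun s => ⟨sub_nonneg.2 (hmem s).2, sub_le_self 1 (hmem s).1⟩, ?_⟩
  simpa only [Rat.cast_sub, Rat.cast_one] using hlim.const_sub 1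

theorem computable_partialSups_rat {a : ℕ → ℚ} (ha : Computable a) :
    Computable (partialSups a) := by
  have hstep : Computable₂ fun (_ : ℕ) (x : ℕ × ℚ) => max x.2 (a (x.1 + 1)) :=
    computable_rat_max.comp (Computable.snd.comp Computable.snd)
      (ha.comp (Computable.succ.comp (Computable.fst.comp Computable.snd)))
  refine (Computable.nat_rec Computable.id (Computable.const (a 0)) hstep).of_eq fun n => ?_
  induction n with
  | zero => simp
  | succ n ih =>
    rw [← Order.succ_eq_add_one, partialSups_succ, ← ih]
    rfl

theorem IsCompApprox.isLeftCE {a : ℕ → ℚ} {γ : ℝ} (ha : IsCompApprox a γ)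
    (hle : ∀ s, (a s : ℝ) ≤ γ) : IsLeftCE γ := by
  have hsup (s : ℕ) : (partialSups a s : ℝ) ≤ γ := by
    obtain ⟨k, -, hk⟩ := exists_partialSups_eq a s
    exact hk ▸ hle k
  obtain ⟨hcomp, hmem, hlim⟩ := ha
  refine ⟨partialSups a, ⟨computable_partialSups_rat hcomp, fun s => ⟨?_, ?_⟩, ?_⟩,
    (partialSups a).monotone⟩
  · exact (hmem s).1.trans (le_partialSups a s)
  · exact partialSups_le a s 1 fun k _ => (hmem k).2
  · exact tendsto_of_tendsto_of_tendsto_of_le_of_le hlim tendsto_const_nhds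
      (fun s => Rat.cast_le.2 (le_partialSups a s)) hsup

theorem IsLeftCE.one_sub {γ : ℝ} (h : IsLeftCE γ) : IsRightCE (1 - γ) :=
  have ⟨_, ha, hmono⟩ := h
  ⟨_, ha.one_sub, fun _ _ hst => sub_le_sub_left (hmono hst) 1⟩

theorem IsCompApprox.isRightCE {a : ℕ → ℚ} {γ : ℝ} (ha : IsCompApprox a γ)
    (hle : ∀ s, γ ≤ (a s : ℝ)) : IsRightCE γ := by
  rw [← sub_sub_self 1 γ]
  exact (ha.one_sub.isLeftCE fun s => by push_cast; linarith [hle s]).one_sub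

theorem IsCompApprox.isLeftCE_or_isRightCE_of_forall_not_separates {a : ℕ → ℚ} {γ : ℝ}
    (ha : IsCompApprox a γ) (hside : ∀ n, ¬Separates γ (a n) (a (n + 1))) :
    IsLeftCE γ ∨ IsRightCE γ := by
  have hconst (n : ℕ) : (a n : ℝ) < γ ↔ (a 0 : ℝ) < γ := by
    induction n with
    | zero => rfl
    | succ n ih => rw [← not_not.1 (hside n), ih]
  by_cases h0 : (a 0 : ℝ) < γ
  · exact .inl (ha.isLeftCE fun n => ((hconst n).2 h0).le)
  · exact .inr (ha.isRightCE fun n => not_lt.1 (mt (hconst n).1 h0))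

theorem Separates.not_separates {γ x y z : ℝ} (hxy : Separates γ x y) (hyz : Separates γ y z) :
    ¬Separates γ x z := by
  unfold Separates at *
  tauto

theorem IsCompApprox.isLeftCE_or_isRightCE_of_separates_propagates {a : ℕ → ℚ} {γ : ℝ}
    (ha : IsCompApprox a γ)
    (hnext : ∀ᶠ n in atTop,
      Separates γ (a n) (a (n + 1)) → Separates γ (a (n + 1)) (a (n + 2))) :
    IsLeftCE γ ∨ IsRightCE γ := by
  obtain ⟨N, hN⟩ := eventually_atTop.1 hnext
  by_cases hex : ∃ m ≥ N, Separates γ (a m) (a (m + 1))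
  · obtain ⟨m, hm, hm0⟩ := hex
    have halt (k : ℕ) : Separates γ (a (m + k)) (a (m + k + 1)) := by
      induction k with
      | zero => exact hm0
      | succ k ih => exact hN (m + k) (by lia) ih
    have hu : Computable fun k => m + 2 * k :=
      (Primrec.nat_add.comp (Primrec.const m)
        (Primrec.nat_mul.comp (Primrec.const 2) Primrec.id)).to_comp
    have hmono : StrictMono fun k => m + 2 * k := fun _ _ _ => by lia
    exact (ha.comp hu hmono.tendsto_atTop).isLeftCE_or_isRightCE_of_forall_not_separates
      fun k => (halt (2 * k)).not_separates (halt (2 * k + 1))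
  · push Not at hex
    have hu : Computable (N + ·) := (Primrec.nat_add.comp (Primrec.const N) Primrec.id).to_comp
    have hmono : StrictMono (N + ·) := fun _ _ h => Nat.add_lt_add_left h N
    exact (ha.comp hu hmono.tendsto_atTop).isLeftCE_or_isRightCE_of_forall_not_separates
      fun k => hex (N + k) (Nat.le_add_right N k)

/-! ### Approximations that are not speedable -/

theorem eventually_lt_of_not_isRhoSpeedable {a : ℕ → ℚ} {γ : ℝ} {ρ : ℚ}
    (h : ¬IsRhoSpeedable a γ ρ) {f : ℕ → ℕ} (hf : IsComputableOrder f) :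
    ∀ᶠ s in atTop, ρ * |γ - a s| < |γ - a (f s)| := by
  obtain ⟨hirr, hslow⟩ := not_or.1 h
  have hlt : ((ρ : ℝ) : EReal) < speedLiminf a f γ := not_le.1 fun hle => hslow ⟨f, hf, hle⟩
  filter_upwards [eventually_lt_of_lt_liminf hlt] with s hs
  have hpos : 0 < |γ - a s| := abs_pos.2 (sub_ne_zero.2 fun heq => hirr ⟨a s, heq⟩)
  rwa [EReal.coe_lt_coe_iff, abs_div, lt_div_iff₀ hpos] at hs

theorem exists_isComputableOrder_comp_eq {u v : ℕ → ℕ} (hu : Computable u) (hmono : StrictMono u)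
    (hv : IsComputableOrder v) : ∃ f, IsComputableOrder f ∧ ∀ n, f (u n) = v n := by
  obtain ⟨hvcomp, hvmono, hvtop⟩ := hv
  have hex (s : ℕ) : ∃ n, s ≤ u n := ⟨s, hmono.le_apply⟩
  have hle : ComputablePred fun p : ℕ × ℕ => p.1 ≤ u p.2 :=
    computablePred_comp Primrec.nat_le.computablePred
      (Computable.fst.pair (hu.comp Computable.snd))
  have hfind (n : ℕ) : Nat.find (hex (u n)) = n := by
    simp [Nat.find_eq_iff, hmono.le_iff_le]
  have hfindmono : Monotone fun s => Nat.find (hex s) :=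
    fun s t hst => Nat.find_mono fun n hn => hst.trans hn
  have hfindtop : Tendsto (fun s => Nat.find (hex s)) atTop atTop :=
    tendsto_atTop_atTop_of_monotone hfindmono fun n => ⟨u n, (hfind n).ge⟩
  exact ⟨fun s => v (Nat.find (hex s)),
    ⟨hvcomp.comp (Computable.find hle hex), hvmono.comp hfindmono, hvtop.comp hfindtop⟩,
    fun n => congrArg v (hfind n)⟩

theorem eventually_lt_comp_of_not_isRhoSpeedable {a : ℕ → ℚ} {γ : ℝ} {ρ : ℚ}
    (h : ¬IsRhoSpeedable a γ ρ) {u v : ℕ → ℕ} (hu : Computable u) (hmono : StrictMono u)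
    (hv : IsComputableOrder v) : ∀ᶠ n in atTop, ρ * |γ - a (u n)| < |γ - a (v n)| := by
  obtain ⟨f, hf, hfu⟩ := exists_isComputableOrder_comp_eq hu hmono hv
  filter_upwards [hmono.tendsto_atTop.eventually (eventually_lt_of_not_isRhoSpeedable h hf)]
    with n hn
  rwa [hfu] at hn

theorem isComputableOrder_of_strictMono {u : ℕ → ℕ} (hu : Computable u) (hmono : StrictMono u) :
    IsComputableOrder u :=
  ⟨hu, hmono.monotone, hmono.tendsto_atTop⟩

theorem exists_strictMono_greedy {P : ℕ → ℕ → Prop}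
    (hP : ComputablePred fun p : ℕ × ℕ => P p.1 p.2) (hirrefl : ∀ r, ¬P r r)
    (hex : ∀ r, ∃ t ≥ r, P r t) :
    ∃ R : ℕ → ℕ, Computable R ∧ StrictMono R ∧
      ∀ n, P (R n) (R (n + 1)) ∧ ∀ t ≥ R n, t < R (n + 1) → ¬P (R n) t := by
  classical
  have hshift (r : ℕ) : ∃ k, P r (r + k) :=
    have ⟨t, hle, ht⟩ := hex r
    ⟨t - r, by rwa [Nat.add_sub_cancel' hle]⟩
  have hPshift : ComputablePred fun p : ℕ × ℕ => P p.1 (p.1 + p.2) :=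
    computablePred_comp hP (Computable.fst.pair Primrec.nat_add.to_comp)
  have hnext : Computable fun r => r + Nat.find (hshift r) :=
    Primrec.nat_add.to_comp.comp Computable.id (Computable.find hPshift hshift)
  have hstep : Computable₂ fun (_ : ℕ) (x : ℕ × ℕ) => x.2 + Nat.find (hshift x.2) :=
    hnext.comp (Computable.snd.comp Computable.snd)
  refine ⟨fun n => n.rec 0 fun _ r => r + Nat.find (hshift r),
    Computable.nat_rec Computable.id (Computable.const 0) hstep,
    strictMono_nat_of_lt_succ fun n => ?_,
    fun n => ⟨Nat.find_spec (hshift _), fun t hle hlt => ?_⟩⟩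
  · exact Nat.lt_add_of_pos_right ((Nat.find_pos _).2 (hirrefl _))
  · obtain ⟨k, rfl⟩ := Nat.exists_eq_add_of_le hle
    exact Nat.find_min (hshift _) (Nat.add_lt_add_iff_left.1 hlt)

theorem exists_strictMono_greedy_of_eventually {P : ℕ → ℕ → Prop}
    (hP : ComputablePred fun p : ℕ × ℕ => P p.1 p.2) (hirrefl : ∀ r, ¬P r r)
    (hex : ∀ᶠ r in atTop, ∃ t ≥ r, P r t) :
    ∃ R : ℕ → ℕ, Computable R ∧ StrictMono R ∧
      ∀ n, P (R n) (R (n + 1)) ∧ ∀ t ≥ R n, t < R (n + 1) → ¬P (R n) t := by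
  obtain ⟨N, hN⟩ := eventually_atTop.1 hex
  have hshift : Computable (N + ·) := Primrec.nat_add.to_comp.comp (Computable.const N) .id
  have hPshift : ComputablePred fun p : ℕ × ℕ => P (N + p.1) (N + p.2) :=
    computablePred_comp hP ((hshift.comp Computable.fst).pair (hshift.comp Computable.snd))
  have hexshift (r : ℕ) : ∃ t ≥ r, P (N + r) (N + t) := by
    obtain ⟨t, hle, ht⟩ := hN (N + r) (Nat.le_add_right N r)
    obtain ⟨k, rfl⟩ := Nat.exists_eq_add_of_le hle
    exact ⟨r + k, Nat.le_add_right r k, by rwa [← Nat.add_assoc]⟩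
  obtain ⟨R, hR, hmono, hgreedy⟩ :=
    exists_strictMono_greedy hPshift (fun r => hirrefl (N + r)) hexshift
  refine ⟨fun n => N + R n, hshift.comp hR, fun _ _ h => Nat.add_lt_add_left (hmono h) N,
    fun n => ⟨(hgreedy n).1, fun t hle hlt => ?_⟩⟩
  obtain ⟨k, rfl⟩ := Nat.exists_eq_add_of_le ((Nat.le_add_right N (R n)).trans hle)
  exact (hgreedy n).2 k (Nat.add_le_add_iff_left.1 hle) (Nat.add_lt_add_iff_left.1 hlt)

theorem IsCompApprox.exists_greedy_subsequence {a : ℕ → ℚ} {γ : ℝ} (ha : IsCompApprox a γ)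
    (hstep : ∀ᶠ r in atTop, (|a (r + 1) - a r| : ℝ) < 3 * |γ - a (r + 1)|) :
    ∃ R : ℕ → ℕ, Computable R ∧ StrictMono R ∧ ∀ n,
      |a (R n + 1) - a (R n)| < 3 * |a (R (n + 1) + 1) - a (R n + 1)| ∧
      3 * |a (R (n + 1)) - a (R n + 1)| ≤ |a (R n + 1) - a (R n)| := by
  obtain ⟨hcomp, -, hlim⟩ := ha
  have hdist {f g : ℕ × ℕ → ℕ} (hf : Computable f) (hg : Computable g) :
      Computable fun p => |a (f p) - a (g p)| :=
    computable_rat_abs.comp (computable_rat_sub.comp (hcomp.comp hf) (hcomp.comp hg))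
  have hr : Computable fun p : ℕ × ℕ => p.1 + 1 := Computable.succ.comp Computable.fst
  have ht : Computable fun p : ℕ × ℕ => p.2 + 1 := Computable.succ.comp Computable.snd
  have hP : ComputablePred fun p : ℕ × ℕ =>
      |a (p.1 + 1) - a p.1| < 3 * |a (p.2 + 1) - a (p.1 + 1)| :=
    computablePred_comp computablePred_rat_lt ((hdist hr Computable.fst).pair
      (computable_rat_mul.comp (Computable.const 3) (hdist ht hr)))
  have hex : ∀ᶠ r in atTop, ∃ t ≥ r, |a (r + 1) - a r| < 3 * |a (t + 1) - a (r + 1)| := by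
    filter_upwards [hstep] with r hr
    have hlim' : Tendsto (fun t => 3 * |(a (t + 1) : ℝ) - a (r + 1)|) atTop
        (nhds (3 * |γ - a (r + 1)|)) :=
      ((hlim.comp (tendsto_add_atTop_nat 1)).sub_const _).abs.const_mul 3
    obtain ⟨t, hle, ht⟩ :=
      ((eventually_ge_atTop r).and (hlim'.eventually (lt_mem_nhds hr))).exists
    exact ⟨t, hle, by exact_mod_cast ht⟩
  obtain ⟨R, hR, hmono, hgreedy⟩ := exists_strictMono_greedy_of_eventually hP (by simp) hex
  refine ⟨R, hR, hmono, fun n => ⟨(hgreedy n).1, not_lt.1 ?_⟩⟩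
  have hlt : R n < R (n + 1) := hmono n.lt_succ_self
  have hmin := (hgreedy n).2 (R (n + 1) - 1) (by lia) (by lia)
  rwa [Nat.sub_add_cancel (by lia)] at hmin

theorem not_separates_of_abs_sub_lt {γ x y : ℝ} (h : |x - y| < |γ - y|) : ¬Separates γ x y := by
  grind [Separates]

theorem Separates.abs_sub_le {γ x y : ℝ} (h : Separates γ x y) : |γ - y| ≤ |y - x| := by
  grind [Separates]

theorem abs_sub_eq_of_not_separates {γ x y : ℝ} (h : ¬Separates γ x y) :
    |y - x| = |(|γ - y| - |γ - x|)| := by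
  grind [Separates]

/- The factor `3` suits `ρ = 3 / 4`: a factor `c` works for `ρ`-slow approximations whenever
`1 + 1 / ρ ≤ c ≤ ρ / (1 - ρ)`, and such a `c` exists as soon as `1 / √2 ≤ ρ`. -/
theorem Separates.separates_next {γ w₀ b₀ w₁ b₁ b₂ : ℝ} (hcross : Separates γ b₀ b₁)
    (hstep : |b₀ - w₀| < 3 * |γ - b₀|) (hnear : 3 * |w₁ - b₀| ≤ |b₀ - w₀|)
    (hjump : |b₁ - w₁| < 3 * |b₂ - b₁|)
    (h₁₂ : 3 / 4 * |γ - b₁| < |γ - b₂|) (h₂₁ : 3 / 4 * |γ - b₂| < |γ - b₁|) :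
    Separates γ b₁ b₂ := by
  by_contra hsame
  have hside : ¬Separates γ w₁ b₀ := not_separates_of_abs_sub_lt (by linarith)
  have hcross' : Separates γ w₁ b₁ := by
    unfold Separates at *
    tauto
  have hfar : |γ - b₁| < 3 * |b₂ - b₁| := hcross'.abs_sub_le.trans_lt hjump
  have hclose : |b₂ - b₁| < |γ - b₁| / 3 := by
    rw [abs_sub_eq_of_not_separates hsame, abs_sub_lt_iff]
    constructor <;> linarith
  linarith

theorem isLeftCE_or_isRightCE_of_not_isRhoSpeedable {a : ℕ → ℚ} {γ : ℝ}
    (ha : IsCompApprox a γ) (h : ¬IsRhoSpeedable a γ (3 / 4)) : IsLeftCE γ ∨ IsRightCE γ := by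
  have hslow {u v : ℕ → ℕ} (hu : Computable u) (hmono : StrictMono u) (hv : Computable v)
      (hmono' : StrictMono v) : ∀ᶠ n in atTop, (3 / 4 : ℝ) * |γ - a (u n)| < |γ - a (v n)| := by
    simpa using eventually_lt_comp_of_not_isRhoSpeedable h hu hmono
      (isComputableOrder_of_strictMono hv hmono')
  have hstep : ∀ᶠ r in atTop, (|a (r + 1) - a r| : ℝ) < 3 * |γ - a (r + 1)| := by
    filter_upwards [hslow Computable.id strictMono_id Computable.succ Order.succ_strictMono]
      with r hr
    simp only [id_eq, Nat.succ_eq_add_one] at hr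
    linarith [abs_sub_le (a (r + 1) : ℝ) γ (a r), abs_sub_comm (a (r + 1) : ℝ) γ,
      abs_nonneg (γ - a r)]
  obtain ⟨R, hR, hRmono, hgreedy⟩ := ha.exists_greedy_subsequence hstep
  have hb : Computable fun n => R n + 1 := Computable.succ.comp hR
  have hbmono : StrictMono fun n => R n + 1 := Order.succ_strictMono.comp hRmono
  have hb' : Computable fun n => R (n + 1) + 1 := hb.comp Computable.succ
  have hbmono' : StrictMono fun n => R (n + 1) + 1 := hbmono.comp Order.succ_strictMono
  refine (ha.comp hb hbmono.tendsto_atTop).isLeftCE_or_isRightCE_of_separates_propagates ?_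
  filter_upwards [hRmono.tendsto_atTop.eventually hstep,
    (tendsto_add_atTop_nat 1).eventually (hslow hb hbmono hb' hbmono'),
    (tendsto_add_atTop_nat 1).eventually (hslow hb' hbmono' hb hbmono)] with n hn h₁₂ h₂₁ hcross
  exact Separates.separates_next (w₁ := a (R (n + 1))) hcross hn
    (by exact_mod_cast (hgreedy n).2) (by exact_mod_cast (hgreedy (n + 1)).1) h₁₂ h₂₁

theorem dce_not_lce_not_rce_fully_speedable_general {a : ℕ → ℚ} {γ : ℝ} (ha : IsCompApprox a γ)
    (hnotlce : ¬IsLeftCE γ) (hnotrce : ¬IsRightCE γ) : IsRhoSpeedable a γ (3 / 4) :=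
  not_not.1 fun h =>
    (isLeftCE_or_isRightCE_of_not_isRhoSpeedable ha h).elim hnotlce hnotrce

theorem dce_not_lce_not_rce_fully_speedable (γ : ℝ) (hγ : γ ∈ Set.Ioo (0 : ℝ) 1)
    (hdce : ∃ a : ℕ → ℚ, IsDCEApprox a γ)
    (hnotlce : ¬ ∃ a : ℕ → ℚ, IsCompApprox a γ ∧ Monotone a)
    (hnotrce : ¬ ∃ a : ℕ → ℚ, IsCompApprox a γ ∧ Antitone a) :
    ∀ a : ℕ → ℚ, IsDCEApprox a γ → IsSpeedable a γ :=
  fun _ ha => ⟨3 / 4, by norm_num, by norm_num,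
    dce_not_lce_not_rce_fully_speedable_general ha.1 hnotlce hnotrce⟩
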